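/- **Setup.** Let $g(x,y)=\chi_E(x,y)\prod_{i=1}^n|f_i(x,y)|^{\gamma_i}$, where $\gamma_i\in\mathbb R$, the $f_i$ are real analytic and not identically zero near the origin of $\mathbb R^2$, $g$ is integrable near the origin, and $E$ is either a disk $\{x^2+y^2<r_0^2\}$ or a finite disjoint union of open regions, each of them one of the two regions into which the disk $\{x^2+y^2<r_0^2\}$ is cut by two curves joining the origin to its boundary circle; each curve is an arc of one half of a graph $y=h(|x|^{1/N})$ or $x=h(|y|^{1/N})$ with $h$ real analytic, $h(0)=0$, $N$ a positive integer, and all these curves are pairwise disjoint except at the origin. Let $(x_0,y_0)\in\mathbb R^2$, $A>0$, $c>0$, and let $U$ be an open neighborhood of the origin on which $g$ is integrable and on which $m(x_0+x,y_0+y)=\alpha(x,y)g(x,y)$, where on $U$ the real function $\alpha$ is $C^1$ away from the origin, $|\alpha|\le A$, $|\nabla\alpha(x,y)|\le A(x^2+y^2)^{-1/2}$ for $(x,y)\ne(0,0)$, and $\alpha>c$. Let $\varphi$ be a nonnegative smooth compactly supported function that equals $1$ near $(x_0,y_0)$ and whose support is contained in $(x_0,y_0)+U$, and let $$K_\varphi(t,u)=\int_{\mathbb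 R^2}\varphi(x,y)\,m(x,y)\,e^{i(tx+uy)}\,dx\,dy .$$ **Exponents.** For a unit vector $v=(v_1,v_2)$ with $v^\perp=(v_2,-v_1)$, the strip exponents $\delta_v>0$, $e_v\in\{0,1\}$ are those for which, for each sufficiently small $c'>0$, $\int_{\{|(x,y)\cdot v|<r,\ |(x,y)\cdot v^\perp|<c'\}}g$ is bounded above and below by positive constants (depending on $c'$) times $r^{\delta_v}|\ln r|^{e_v}$ for $0<r<c'$. The disk exponents $\epsilon>0$, $d\in\{0,1\}$ are those for which $\int_{x^2+y^2<r^2}g$ is bounded above and below by positive constants times $r^{\epsilon}|\ln r|^{d}$ for all small $r>0$. For $H>0$ let $l_H$ be the set of points within distance $H$ of the line $l$ through the origin in direction $v$. **Claim.** 1. If $\delta_v<1$ (which holds for every $v$ when $\epsilon<\tfrac12$, because $\delta_v\le\epsilon$), then for every $H>0$ and every $\delta>\delta_v$ there is no constant $C$ with $|K_\varphi(t,u)|\le C(2+|(t,u)|)^{-\delta}$ for all $(t,u)\in l_H$. More generally, for no integer $k\ge0$ is there a constant $C$ with $|K_\varphi(t,u)|\le C(2+|(t,u)|)^{-\delta}(\ln(2+|(t,u)|))^{k}$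 for all $(t,u)\in l_H$. 2. If $\epsilon<1$, then for every unit vector $v$, every $H>0$, every $\delta>\epsilon$ and every integer $k\ge0$ there is no constant $C$ with $|K_\varphi(t,u)|\le C(2+|(t,u)|)^{-\delta}(\ln(2+|(t,u)|))^{k}$ for all $(t,u)\in l_H$. 3. Let $\delta_0$ be the minimum (or, more generally, the infimum) of $\delta_v$ over all unit vectors $v$. If $\delta_0<1$, then for every $\delta>\delta_0$ and every integer $k\ge0$ there is no constant $C$ with $|K_\varphi(t,u)|\le C(2+|(t,u)|)^{-\delta}(\ln(2+|(t,u)|))^{k}$ for all $(t,u)\in\mathbb R^2$. -/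

import Mathlib

open MeasureTheory Set Filter
open scoped Topology ContDiff

noncomputable section

/-- The Euclidean magnitude `|(x,y)| = √(x²+y²)` of a point of `ℝ²`
(the norm of `ℝ × ℝ` in Mathlib is the sup norm). -/
def nrm2 (p : ℝ × ℝ) : ℝ := Real.sqrt (p.1 ^ 2 + p.2 ^ 2)

/-- The open Euclidean disk `{(x,y) : x²+y² < r²}` centered at the origin. -/
def disk2 (r : ℝ) : Set (ℝ × ℝ) := {p : ℝ × ℝ | p.1 ^ 2 + p.2 ^ 2 < r ^ 2}

/-- The circle `{(x,y) : x²+y² = r²}` centered at the origin. -/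
def circle2 (r : ℝ) : Set (ℝ × ℝ) := {p : ℝ × ℝ | p.1 ^ 2 + p.2 ^ 2 = r ^ 2}

/-- Dot product on `ℝ²`. -/
def dot2 (p q : ℝ × ℝ) : ℝ := p.1 * q.1 + p.2 * q.2

/-- The perpendicular vector `v^⊥ = (v₂, −v₁)`. -/
def perp2 (v : ℝ × ℝ) : ℝ × ℝ := (v.2, -v.1)

/-- The function `g = χ_E · ∏ᵢ |fᵢ|^(γᵢ)`. -/
def stdFun (n : ℕ) (f : Fin n → ℝ × ℝ → ℝ) (γ : Fin n → ℝ) (E : Set (ℝ × ℝ)) :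
    ℝ × ℝ → ℝ :=
  E.indicator fun p => ∏ i, |f i p| ^ (γ i)

/-- A boundary curve: the arc, from the origin up to the circle of radius `r₀`, of one half
(`σ = 1` or `σ = -1`) of a graph `y = h(|x|^{1/N})` or `x = h(|y|^{1/N})`, with `h` real
analytic and `h 0 = 0`.  The arc is parametrized by `s = |x|` (resp. `s = |y|`) in `[0,b]`,
stays in the open disk for `s < b` and reaches the circle at `s = b`. -/
def IsPuiseuxBdryCurve (r₀ : ℝ) (C : Set (ℝ × ℝ)) : Prop :=
  ∃ (N : ℕ) (h : ℝ → ℝ) (b σ : ℝ) (κ : ℝ → ℝ × ℝ),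
    0 < N ∧ 0 < b ∧ (σ = 1 ∨ σ = -1) ∧
    AnalyticOnNhd ℝ h (Icc (0 : ℝ) (b ^ ((N : ℝ)⁻¹))) ∧ h 0 = 0 ∧
    ((∀ s, κ s = (σ * s, h (s ^ ((N : ℝ)⁻¹)))) ∨ (∀ s, κ s = (h (s ^ ((N : ℝ)⁻¹)), σ * s))) ∧
    C = κ '' Icc (0 : ℝ) b ∧
    (∀ s ∈ Ico (0 : ℝ) b, κ s ∈ disk2 r₀) ∧ κ b ∈ circle2 r₀

/-- The admissible form of the set `E`: either a disk centered at the origin, or a finite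
disjoint union of open regions, each of them one of the regions into which two boundary curves
(joining the origin to the circle of radius `r₀`) cut the disk, where all the boundary curves
are pairwise disjoint in the closed disk, apart from their common end point at the origin. -/
def IsStdDomain (E : Set (ℝ × ℝ)) : Prop :=
  (∃ r₀ > (0 : ℝ), E = disk2 r₀) ∨
  (∃ r₀ > (0 : ℝ), ∃ m : ℕ, ∃ Es : Fin m → Set (ℝ × ℝ), ∃ Cs : Fin m → Fin 2 → Set (ℝ × ℝ),
    E = Set.iUnion Es ∧
    (Pairwise fun i j => Disjoint (Es i) (Es j)) ∧
    (∀ i, IsOpen (Es i) ∧ IsConnected (Es i) ∧ Es i ⊆ disk2 r₀ \ (Cs i 0 ∪ Cs i 1) ∧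
      frontier (Es i) ⊆ Cs i 0 ∪ Cs i 1 ∪ circle2 r₀) ∧
    (∀ i j, IsPuiseuxBdryCurve r₀ (Cs i j)) ∧
    (Pairwise fun q q' : Fin m × Fin 2 =>
      Disjoint (Cs q.1 q.2 \ {0}) (Cs q'.1 q'.2 \ {0})))

/-- The standard form: the `fᵢ` are real analytic and not identically zero near the origin,
`g = χ_E ∏ |fᵢ|^(γᵢ)` is integrable near the origin, and `E` is an admissible domain. -/
structure StandardForm (n : ℕ) (f : Fin n → ℝ × ℝ → ℝ) (γ : Fin n → ℝ)
    (E : Set (ℝ × ℝ)) : Prop where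
  analytic : ∃ U ∈ 𝓝 (0 : ℝ × ℝ), ∀ i, AnalyticOnNhd ℝ (f i) U
  nontriv : ∀ i, ¬ (∀ᶠ p in 𝓝 (0 : ℝ × ℝ), f i p = 0)
  integ : ∃ U ∈ 𝓝 (0 : ℝ × ℝ), IntegrableOn (stdFun n f γ E) U
  domain : IsStdDomain E

/-- `ε`, `d` are the disk exponents of `g`: `ε > 0`, `d ∈ {0,1}` and
`c₁ r^ε |ln r|^d ≤ ∫_{x²+y²<r²} g ≤ c₂ r^ε |ln r|^d` for all small `r`. -/
def BallBound (g : ℝ × ℝ → ℝ) (ε : ℝ) (d : ℕ) : Prop :=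
  0 < ε ∧ d ≤ 1 ∧ ∃ c₁ > (0 : ℝ), ∃ c₂ > (0 : ℝ), ∃ c₃ > (0 : ℝ), ∀ r : ℝ, 0 < r → r < c₃ →
    c₁ * r ^ ε * |Real.log r| ^ d ≤ (∫ p in disk2 r, g p) ∧
    (∫ p in disk2 r, g p) ≤ c₂ * r ^ ε * |Real.log r| ^ d

/-- The strip `{(x,y) : |(x,y)·v| < r, |(x,y)·v^⊥| < c}`. -/
def strip2 (v : ℝ × ℝ) (r c : ℝ) : Set (ℝ × ℝ) :=
  {p : ℝ × ℝ | |dot2 p v| < r ∧ |dot2 p (perp2 v)| < c}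

/-- `δ`, `e` are the strip exponents of `g` in the direction `v`: `δ > 0`, `e ∈ {0,1}` and, for
every small `c`, `a r^δ |ln r|^e ≤ ∫_{strip} g ≤ b r^δ |ln r|^e` for `0 < r < c`, where the strip
is `strip2 v r c` and `a, b > 0` may depend on `c`. -/
def StripBound (g : ℝ × ℝ → ℝ) (v : ℝ × ℝ) (δ : ℝ) (e : ℕ) : Prop :=
  0 < δ ∧ e ≤ 1 ∧ ∃ cv > (0 : ℝ), ∀ c : ℝ, 0 < c → c < cv →
    ∃ a > (0 : ℝ), ∃ b > (0 : ℝ), ∀ r : ℝ, 0 < r → r < c →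
      a * r ^ δ * |Real.log r| ^ e ≤ (∫ p in strip2 v r c, g p) ∧
      (∫ p in strip2 v r c, g p) ≤ b * r ^ δ * |Real.log r| ^ e

/-- On the open set `U`, the factor `α` is `C¹` away from the origin, `|α| ≤ A`, and the
Euclidean length of its gradient is at most `A (x²+y²)^{-1/2}`. -/
def AlphaBound (α : ℝ × ℝ → ℝ) (A : ℝ) (U : Set (ℝ × ℝ)) : Prop :=
  ContDiffOn ℝ 1 α (U \ {0}) ∧ (∀ p ∈ U, |α p| ≤ A) ∧
  ∀ p ∈ U \ {0}, nrm2 (fderiv ℝ α p (1, 0), fderiv ℝ α p (0, 1)) ≤ A * (nrm2 p)⁻¹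

/-- The localized kernel `K_φ(t,u) = ∫ φ(x,y) m(x,y) e^{i(tx+uy)} dx dy`. -/
def Kphi (φ m : ℝ × ℝ → ℝ) (q : ℝ × ℝ) : ℂ :=
  ∫ p : ℝ × ℝ, ((φ p * m p : ℝ) : ℂ) * Complex.exp (Complex.I * ((dot2 q p : ℝ) : ℂ))

/-- `l_H`: the points within distance `H` of the line `l` through the origin in direction `v`. -/
def lineNhd (v : ℝ × ℝ) (H : ℝ) : Set (ℝ × ℝ) :=
  {q : ℝ × ℝ | ∃ s : ℝ, nrm2 (q - s • v) ≤ H}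

/-- `|K(t,u)| ≤ C (2+|(t,u)|)^{-δ} (ln (2+|(t,u)|))^k` on `S`, for some constant `C`.
For `k = 0` this is the bound without logarithm. -/
def HasDecayOn (K : ℝ × ℝ → ℂ) (S : Set (ℝ × ℝ)) (δ : ℝ) (k : ℕ) : Prop :=
  ∃ C : ℝ, ∀ q ∈ S, ‖K q‖ ≤ C * (2 + nrm2 q) ^ (-δ) * Real.log (2 + nrm2 q) ^ k

end

/-!
Write `F = φ m`. Up to a phase, `t ↦ Kphi φ m (t • v)` is the characteristic function of the image
`ν` of the measure `F(z + p) dp` under `p ↦ p · v`. Pairing `ν`, dilated by `1/r`, with a standard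
Gaussian and moving the Fourier transform from one measure to the other turns a decay `|t|^(-δ')`
into the mass bound `ν {|x| < r} ≤ C r^δ'`; here `δ' < 1` makes `|t|^(-δ')` Gaussian-integrable.
Since `F(z + ·)` dominates a multiple of `g` near the origin, this mass is at least that of `g` over
small strips or disks, and comparing powers of `r` as `r → 0` bounds `δ'` by the strip or disk
exponent.
-/

section CharFun

open ProbabilityTheory
open scoped NNReal

theorem integral_charFun_comm {E : Type*} [NormedAddCommGroup E] [InnerProductSpace ℝ E]
    [MeasurableSpace E] [BorelSpace E] [SecondCountableTopology E] (μ ν : Measure E)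
    [IsFiniteMeasure μ] [IsFiniteMeasure ν] :
    ∫ t, charFun μ t ∂ν = ∫ x, charFun ν x ∂μ := by
  have hcont : Continuous fun z : E × E => Complex.exp ((inner ℝ z.2 z.1 : ℝ) * Complex.I) := by
    fun_prop
  have hint : Integrable (fun z : E × E => Complex.exp ((inner ℝ z.2 z.1 : ℝ) * Complex.I))
      (ν.prod μ) :=
    .of_bound hcont.aestronglyMeasurable 1
      (ae_of_all _ fun z => (Complex.norm_exp_ofReal_mul_I _).le)
  simp only [charFun_apply]
  rw [integral_integral_swap hint]
  simp only [real_inner_comm]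

theorem integrable_abs_rpow_gaussianReal {s : ℝ} (hs : -1 < s) {v : ℝ≥0} (hv : v ≠ 0) :
    Integrable (fun x : ℝ => |x| ^ s) (gaussianReal 0 v) := by
  have hb : (0 : ℝ) < (2 * v)⁻¹ := by positivity
  have hradial := (integrable_fun_norm_addHaar (volume : Measure ℝ)
    (f := fun y : ℝ => y ^ s * Real.exp (-(2 * v : ℝ)⁻¹ * y ^ 2))).2 (by
      simpa using integrableOn_rpow_mul_exp_neg_mul_sq hb hs)
  rw [gaussianReal_of_var_ne_zero 0 hv, integrable_withDensity_iff_integrable_smul'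
    (measurable_gaussianPDF 0 v) (ae_of_all _ fun _ => gaussianPDF_lt_top)]
  refine (hradial.const_mul (√(2 * Real.pi * v))⁻¹).congr (ae_of_all _ fun x => ?_)
  simp only [toReal_gaussianPDF, gaussianPDFReal, Real.norm_eq_abs, sq_abs, sub_zero, smul_eq_mul]
  rw [neg_div, div_eq_inv_mul, neg_mul]
  ring

theorem exp_neg_half_mul_measureReal_abs_lt_one_le (ν : Measure ℝ) [IsFiniteMeasure ν] :
    Real.exp (-1 / 2) * ν.real {x | |x| < 1} ≤ ∫ t, ‖charFun ν t‖ ∂gaussianReal 0 1 := by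
  have hcharFun (x : ℝ) : charFun (gaussianReal 0 1) x = (Real.exp (-x ^ 2 / 2) : ℝ) := by
    rw [charFun_gaussianReal]
    push_cast
    congr 1
    ring
  have hint : Integrable (fun x : ℝ => Real.exp (-x ^ 2 / 2)) ν :=
    .of_bound (by fun_prop) 1 (ae_of_all _ fun x => by
      rw [Real.norm_eq_abs, Real.abs_exp, Real.exp_le_one_iff]
      nlinarith [sq_nonneg x])
  have hsub : {x : ℝ | |x| < 1} ⊆ {x | Real.exp (-1 / 2) ≤ Real.exp (-x ^ 2 / 2)} := fun x hx => by
    rw [mem_ofPred_eq, Real.exp_le_exp]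
    linarith [(sq_lt_one_iff_abs_lt_one x).2 hx]
  calc Real.exp (-1 / 2) * ν.real {x | |x| < 1}
      ≤ Real.exp (-1 / 2) * ν.real {x | Real.exp (-1 / 2) ≤ Real.exp (-x ^ 2 / 2)} := by
        gcongr
        exact measure_ne_top _ _
    _ ≤ ∫ x, Real.exp (-x ^ 2 / 2) ∂ν :=
        mul_meas_ge_le_integral_of_nonneg (ae_of_all _ fun x => (Real.exp_pos _).le) hint _
    _ ≤ ‖∫ x, charFun (gaussianReal 0 1) x ∂ν‖ := by
        simp only [hcharFun, integral_complex_ofReal, Complex.norm_real]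
        exact le_abs_self _
    _ = ‖∫ t, charFun ν t ∂gaussianReal 0 1‖ := by rw [integral_charFun_comm]
    _ ≤ ∫ t, ‖charFun ν t‖ ∂gaussianReal 0 1 := norm_integral_le_integral_norm _

theorem measureReal_abs_lt_le_of_norm_charFun_le {ν : Measure ℝ} [IsFiniteMeasure ν] {C δ : ℝ}
    (hδ : δ < 1) (hdecay : ∀ t ≠ 0, ‖charFun ν t‖ ≤ C * |t| ^ (-δ)) {r : ℝ} (hr : 0 < r) :
    ν.real {x | |x| < r} ≤
      Real.exp (1 / 2) * (C * ∫ t, |t| ^ (-δ) ∂gaussianReal 0 1) * r ^ δ := by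
  have hscale : (ν.map (r⁻¹ * ·)).real {x | |x| < 1} = ν.real {x | |x| < r} := by
    rw [map_measureReal_apply (by fun_prop) (measurableSet_lt (by fun_prop) measurable_const)]
    congr 1
    ext x
    simp [abs_mul, abs_of_pos hr, inv_mul_lt_iff₀ hr]
  have hbound : ∀ᵐ t ∂gaussianReal 0 1,
      ‖charFun (ν.map (r⁻¹ * ·)) t‖ ≤ C * r ^ δ * |t| ^ (-δ) := by
    have := nullSingletonClass_gaussianReal (μ := 0) (one_ne_zero (α := ℝ≥0))
    filter_upwards [Measure.ae_ne (gaussianReal 0 1) 0] with t ht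
    rw [charFun_map_mul]
    refine (hdecay _ (mul_ne_zero (inv_ne_zero hr.ne') ht)).trans_eq ?_
    rw [abs_mul, abs_inv, abs_of_pos hr, Real.mul_rpow (by positivity) (abs_nonneg t),
      Real.inv_rpow hr.le, Real.rpow_neg hr.le, inv_inv, mul_assoc]
  have hmoment := integrable_abs_rpow_gaussianReal (neg_lt_neg hδ) (one_ne_zero (α := ℝ≥0))
  calc ν.real {x | |x| < r}
      = Real.exp (1 / 2) * (Real.exp (-1 / 2) * (ν.map (r⁻¹ * ·)).real {x | |x| < 1}) := by
        rw [hscale, ← mul_assoc, ← Real.exp_add]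
        norm_num
    _ ≤ Real.exp (1 / 2) * ∫ t, C * r ^ δ * |t| ^ (-δ) ∂gaussianReal 0 1 := by
        gcongr
        exact (exp_neg_half_mul_measureReal_abs_lt_one_le _).trans
          (integral_mono_of_nonneg (ae_of_all _ fun t => norm_nonneg _) (hmoment.const_mul _)
            hbound)
    _ = Real.exp (1 / 2) * (C * ∫ t, |t| ^ (-δ) ∂gaussianReal 0 1) * r ^ δ := by
        rw [integral_const_mul]
        ring

variable {X : Type*} [MeasurableSpace X] {μ : Measure X} {F L : X → ℝ}

theorem charFun_map_withDensity_ofReal (hF : AEMeasurable F μ) (hF0 : 0 ≤ F)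
    (hL : Measurable L) (t : ℝ) :
    charFun ((μ.withDensity fun p => ENNReal.ofReal (F p)).map L) t =
      ∫ p, (F p : ℂ) * Complex.exp (Complex.I * ((t * L p : ℝ) : ℂ)) ∂μ := by
  rw [charFun_apply_real, integral_map hL.aemeasurable (by fun_prop),
    integral_withDensity_eq_integral_toReal_smul₀ hF.ennreal_ofReal
      (ae_of_all _ fun _ => ENNReal.ofReal_lt_top)]
  refine integral_congr_ae (ae_of_all _ fun p => ?_)
  simp only [ENNReal.toReal_ofReal (hF0 p), Complex.real_smul]
  push_cast
  ring_nf

theorem setIntegral_abs_lt_le_of_norm_fourier_le (hF : Integrable F μ) (hF0 : 0 ≤ F)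
    (hL : Measurable L) {C δ : ℝ} (hδ : δ < 1)
    (hdecay : ∀ t : ℝ, t ≠ 0 →
      ‖∫ p, (F p : ℂ) * Complex.exp (Complex.I * ((t * L p : ℝ) : ℂ)) ∂μ‖ ≤ C * |t| ^ (-δ))
    {r : ℝ} (hr : 0 < r) :
    ∫ p in {p | |L p| < r}, F p ∂μ ≤
      Real.exp (1 / 2) * (C * ∫ t, |t| ^ (-δ) ∂gaussianReal 0 1) * r ^ δ := by
  have := isFiniteMeasure_withDensity_ofReal hF.2
  have hS : MeasurableSet {x : ℝ | |x| < r} := measurableSet_lt (by fun_prop) measurable_const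
  have hmass : ((μ.withDensity fun p => ENNReal.ofReal (F p)).map L).real {x | |x| < r} =
      ∫ p in {p | |L p| < r}, F p ∂μ := by
    rw [map_measureReal_apply hL hS, measureReal_def, withDensity_apply _ (hL hS),
      ← integral_eq_lintegral_of_nonneg_ae (ae_of_all _ hF0) hF.1.restrict]
    rfl
  rw [← hmass]
  refine measureReal_abs_lt_le_of_norm_charFun_le hδ (fun t ht => ?_) hr
  rw [charFun_map_withDensity_ofReal hF.1.aemeasurable hF0 hL]
  exact hdecay t ht

end CharFun

section PowerLaws

theorem le_of_eventually_rpow_mul_log_pow_le {a C β β' : ℝ} {e : ℕ} (ha : 0 < a)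
    (h : ∀ᶠ r in 𝓝[>] (0 : ℝ), a * r ^ β * |Real.log r| ^ e ≤ C * r ^ β') : β' ≤ β := by
  by_contra! hlt
  have hlim : Tendsto (fun r : ℝ => C * r ^ (β' - β)) (𝓝[>] 0) (𝓝 0) := by
    have hcont := (Real.continuousAt_rpow_const 0 (β' - β) (.inr (by linarith))).tendsto
    rw [Real.zero_rpow (by linarith)] at hcont
    simpa using (hcont.mono_left nhdsWithin_le_nhds).const_mul C
  refine ha.not_ge (ge_of_tendsto hlim ?_)
  filter_upwards [h, Real.tendsto_log_nhdsGT_zero.eventually_le_atBot (-1), self_mem_nhdsWithin]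
    with r hr hlog (hr0 : 0 < r)
  have hlog_pow : 1 ≤ |Real.log r| ^ e := one_le_pow₀ (by rw [abs_of_neg] <;> linarith)
  refine le_of_mul_le_mul_right ?_ (Real.rpow_pos_of_pos hr0 β)
  calc a * r ^ β ≤ a * r ^ β * |Real.log r| ^ e := le_mul_of_one_le_right (by positivity) hlog_pow
    _ ≤ C * r ^ β' := hr
    _ = C * r ^ (β' - β) * r ^ β := by rw [mul_assoc, ← Real.rpow_add hr0, sub_add_cancel]

theorem exists_rpow_neg_mul_log_pow_le {δ δ' : ℝ} (hlt : δ' < δ) (k : ℕ) :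
    ∃ M, 0 ≤ M ∧ ∀ x : ℝ, 1 ≤ x → x ^ (-δ) * Real.log x ^ k ≤ M * x ^ (-δ') := by
  obtain ⟨η, hη0, hη⟩ : ∃ η > 0, η * k ≤ δ - δ' := by
    refine ⟨(δ - δ') / (k + 1), div_pos (by linarith) (by positivity), ?_⟩
    rw [div_mul_eq_mul_div, div_le_iff₀ (by positivity)]
    linarith
  refine ⟨η⁻¹ ^ k, by positivity, fun x hx => ?_⟩
  have hx0 : 0 < x := by linarith
  calc x ^ (-δ) * Real.log x ^ k ≤ x ^ (-δ) * (x ^ η / η) ^ k := by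
        gcongr
        · exact Real.log_nonneg hx
        · exact Real.log_le_rpow_div hx0.le hη0
    _ = η⁻¹ ^ k * x ^ (η * k - δ) := by
        rw [div_pow, ← Real.rpow_natCast (x ^ η), ← Real.rpow_mul hx0.le, sub_eq_add_neg,
          Real.rpow_add hx0, div_eq_mul_inv, inv_pow]
        ring
    _ ≤ η⁻¹ ^ k * x ^ (-δ') := by
        gcongr ?_ * ?_
        exact Real.rpow_le_rpow_of_exponent_le hx (by linarith)

theorem HasDecayOn.exists_norm_le_rpow {K : ℝ × ℝ → ℂ} {S : Set (ℝ × ℝ)} {δ δ' : ℝ} {k : ℕ}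
    (hK : HasDecayOn K S δ k) (hδ' : 0 ≤ δ') (hlt : δ' < δ) :
    ∃ C, ∀ q ∈ S, 0 < nrm2 q → ‖K q‖ ≤ C * nrm2 q ^ (-δ') := by
  obtain ⟨C, hC⟩ := hK
  obtain ⟨M, hM0, hM⟩ := exists_rpow_neg_mul_log_pow_le hlt k
  refine ⟨|C| * M, fun q hqS hq => ?_⟩
  have hone : 1 ≤ 2 + nrm2 q := by linarith
  have hlog : 0 ≤ Real.log (2 + nrm2 q) := Real.log_nonneg hone
  calc ‖K q‖ ≤ C * (2 + nrm2 q) ^ (-δ) * Real.log (2 + nrm2 q) ^ k := hC q hqS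
    _ ≤ |C| * ((2 + nrm2 q) ^ (-δ) * Real.log (2 + nrm2 q) ^ k) := by
        rw [mul_assoc]
        gcongr
        exact le_abs_self C
    _ ≤ |C| * (M * (2 + nrm2 q) ^ (-δ')) := by
        gcongr ?_ * ?_
        exact hM _ hone
    _ ≤ |C| * (M * nrm2 q ^ (-δ')) := by
        gcongr ?_ * (?_ * ?_)
        exact Real.rpow_le_rpow_of_nonpos hq (by linarith) (by linarith)
    _ = |C| * M * nrm2 q ^ (-δ') := by ring

end PowerLaws

section PlaneGeometry

theorem nrm2_smul (t : ℝ) (v : ℝ × ℝ) : nrm2 (t • v) = |t| * nrm2 v := by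
  simp only [nrm2, Prod.smul_fst, Prod.smul_snd, smul_eq_mul]
  rw [← Real.sqrt_sq_eq_abs, ← Real.sqrt_mul (sq_nonneg t)]
  ring_nf

theorem dot2_add_right (p q q' : ℝ × ℝ) : dot2 p (q + q') = dot2 p q + dot2 p q' := by
  simp only [dot2, Prod.fst_add, Prod.snd_add]
  ring

theorem dot2_smul_left_eq_mul_dot2 (t : ℝ) (v p : ℝ × ℝ) : dot2 (t • v) p = t * dot2 p v := by
  simp only [dot2, Prod.smul_fst, Prod.smul_snd, smul_eq_mul]
  ring

@[fun_prop]
theorem measurable_dot2_left (v : ℝ × ℝ) : Measurable fun p => dot2 p v := by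
  unfold dot2
  fun_prop

theorem smul_mem_lineNhd (v : ℝ × ℝ) {H : ℝ} (hH : 0 ≤ H) (t : ℝ) : t • v ∈ lineNhd v H :=
  ⟨t, by simpa [nrm2] using hH⟩

theorem sq_add_sq_eq_dot2 {v : ℝ × ℝ} (hv : nrm2 v = 1) (p : ℝ × ℝ) :
    p.1 ^ 2 + p.2 ^ 2 = dot2 p v ^ 2 + dot2 p (perp2 v) ^ 2 := by
  have hv' : v.1 ^ 2 + v.2 ^ 2 = 1 := Real.sqrt_eq_one.1 hv
  simp only [dot2, perp2]
  linear_combination -(p.1 ^ 2 + p.2 ^ 2) * hv'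

theorem measurableSet_disk2 (r : ℝ) : MeasurableSet (disk2 r) :=
  measurableSet_lt (by fun_prop) measurable_const

theorem measurableSet_strip2 (v : ℝ × ℝ) (r c : ℝ) : MeasurableSet (strip2 v r c) :=
  (measurableSet_lt (f := fun p => |dot2 p v|) (by fun_prop) measurable_const).inter
    (measurableSet_lt (f := fun p => |dot2 p (perp2 v)|) (by fun_prop) measurable_const)

theorem disk2_mono {r r' : ℝ} (hr : 0 ≤ r) (h : r ≤ r') : disk2 r ⊆ disk2 r' :=
  fun _ hp => lt_of_lt_of_le hp (pow_le_pow_left₀ hr h 2)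

theorem strip2_subset_disk2_add {v : ℝ × ℝ} (hv : nrm2 v = 1) {r c : ℝ} (hr : 0 ≤ r)
    (hc : 0 ≤ c) : strip2 v r c ⊆ disk2 (r + c) := fun p ⟨hpr, hpc⟩ => by
  have hdot := sq_lt_sq.2 (hpr.trans_le (le_abs_self r))
  have hperp := sq_lt_sq.2 (hpc.trans_le (le_abs_self c))
  change p.1 ^ 2 + p.2 ^ 2 < (r + c) ^ 2
  rw [sq_add_sq_eq_dot2 hv]
  nlinarith [mul_nonneg hr hc]

theorem abs_dot2_lt_of_mem_disk2 {v : ℝ × ℝ} (hv : nrm2 v = 1) {r : ℝ} (hr : 0 ≤ r) {p : ℝ × ℝ}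
    (hp : p ∈ disk2 r) : |dot2 p v| < r := by
  refine abs_lt_of_sq_lt_sq (lt_of_le_of_lt ?_ hp) hr
  rw [sq_add_sq_eq_dot2 hv]
  exact le_add_of_nonneg_right (sq_nonneg _)

theorem exists_disk2_subset_of_mem_nhds {V : Set (ℝ × ℝ)} (hV : V ∈ 𝓝 0) :
    ∃ ρ > 0, disk2 ρ ⊆ V := by
  obtain ⟨ρ, hρ, hball⟩ := Metric.mem_nhds_iff.1 hV
  refine ⟨ρ, hρ, fun p hp => hball ?_⟩
  have hp' : p.1 ^ 2 + p.2 ^ 2 < ρ ^ 2 := hp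
  rw [mem_ball_zero_iff, Prod.norm_def, max_lt_iff]
  exact ⟨abs_lt_of_sq_lt_sq (by nlinarith [sq_nonneg p.2]) hρ.le,
    abs_lt_of_sq_lt_sq (by nlinarith [sq_nonneg p.1]) hρ.le⟩

end PlaneGeometry

section KernelDecay

theorem norm_Kphi_eq_norm_integral_translate (φ m : ℝ × ℝ → ℝ) (z q : ℝ × ℝ) :
    ‖Kphi φ m q‖ = ‖∫ p : ℝ × ℝ, ((φ (z + p) * m (z + p) : ℝ) : ℂ) *
      Complex.exp (Complex.I * ((dot2 q p : ℝ) : ℂ))‖ := by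
  have hphase : Kphi φ m q = Complex.exp (((dot2 q z : ℝ) : ℂ) * Complex.I) *
      ∫ p : ℝ × ℝ, ((φ (z + p) * m (z + p) : ℝ) : ℂ) *
        Complex.exp (Complex.I * ((dot2 q p : ℝ) : ℂ)) := by
    rw [Kphi, ← integral_add_left_eq_self _ z, ← integral_const_mul]
    refine integral_congr_ae (ae_of_all _ fun p => ?_)
    simp only [dot2_add_right, Complex.ofReal_add, mul_add, Complex.exp_add]
    ring_nf
  rw [hphase, norm_mul, Complex.norm_exp_ofReal_mul_I, one_mul]

variable {φ m : ℝ × ℝ → ℝ} {v : ℝ × ℝ} {S : Set (ℝ × ℝ)} {δ : ℝ} {k : ℕ}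

theorem exists_setIntegral_strip_le_of_hasDecayOn (hF : Integrable (φ * m)) (hF0 : 0 ≤ φ * m)
    (z : ℝ × ℝ) (hv : nrm2 v = 1) (hS : ∀ t : ℝ, t • v ∈ S) (hK : HasDecayOn (Kphi φ m) S δ k)
    {δ' : ℝ} (hδ'0 : 0 ≤ δ') (hδ' : δ' < min 1 δ) :
    ∃ C, ∀ r > 0, ∫ p in {p | |dot2 p v| < r}, (φ * m) (z + p) ≤ C * r ^ δ' := by
  obtain ⟨C, hC⟩ := hK.exists_norm_le_rpow hδ'0 (hδ'.trans_le (min_le_right _ _))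
  refine ⟨_, fun r hr => setIntegral_abs_lt_le_of_norm_fourier_le (C := C) (hF.comp_add_left z)
    (fun p => hF0 (z + p)) (by fun_prop) (hδ'.trans_le (min_le_left _ _)) (fun t ht => ?_) hr⟩
  have hdecay := hC (t • v) (hS t)
  rw [norm_Kphi_eq_norm_integral_translate φ m z, nrm2_smul, hv, mul_one] at hdecay
  simp only [dot2_smul_left_eq_mul_dot2] at hdecay
  exact hdecay (abs_pos.2 ht)

variable {g : ℝ × ℝ → ℝ} {z : ℝ × ℝ}

theorem min_one_le_of_hasDecayOn (hg : 0 ≤ g) (hF : Integrable (φ * m)) (hF0 : 0 ≤ φ * m)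
    (hv : nrm2 v = 1) (hS : ∀ t : ℝ, t • v ∈ S) (hK : HasDecayOn (Kphi φ m) S δ k)
    {T : ℝ → Set (ℝ × ℝ)} (hT : ∀ r, MeasurableSet (T r))
    (hTstrip : ∀ᶠ r in 𝓝[>] 0, ∀ p ∈ T r, |dot2 p v| < r) {c : ℝ} (hc : 0 < c)
    (hTlow : ∀ᶠ r in 𝓝[>] (0 : ℝ), ∀ p ∈ T r, c * g p ≤ (φ * m) (z + p))
    {a β : ℝ} {e : ℕ} (ha : 0 < a) (hβ : 0 ≤ β)
    (hmass : ∀ᶠ r in 𝓝[>] 0, a * r ^ β * |Real.log r| ^ e ≤ ∫ p in T r, g p) :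
    min 1 δ ≤ β := by
  refine le_of_forall_lt_imp_le_of_dense fun δ' hδ' => ?_
  rcases le_total δ' 0 with hδ'0 | hδ'0
  · exact hδ'0.trans hβ
  obtain ⟨C, hC⟩ := exists_setIntegral_strip_le_of_hasDecayOn hF hF0 z hv hS hK hδ'0 hδ'
  refine le_of_eventually_rpow_mul_log_pow_le (C := C) (e := e) (mul_pos hc ha) ?_
  filter_upwards [hTstrip, hTlow, hmass, self_mem_nhdsWithin] with r hstrip hlow hr (hr0 : 0 < r)
  have hFz := hF.comp_add_left z
  calc c * a * r ^ β * |Real.log r| ^ e = c * (a * r ^ β * |Real.log r| ^ e) := by ring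
    _ ≤ c * ∫ p in T r, g p := by gcongr
    _ = ∫ p in T r, c * g p := (integral_const_mul c g).symm
    _ ≤ ∫ p in T r, (φ * m) (z + p) :=
        integral_mono_of_nonneg (ae_of_all _ fun p => mul_nonneg hc.le (hg p)) hFz.integrableOn
          (ae_restrict_of_forall_mem (hT r) hlow)
    _ ≤ ∫ p in {p | |dot2 p v| < r}, (φ * m) (z + p) :=
        setIntegral_mono_set hFz.integrableOn (ae_of_all _ fun p => hF0 (z + p))
          (LE.le.eventuallyLE hstrip)
    _ ≤ C * r ^ δ' := hC r hr0

/-- `F` is a mass density that, near `z`, dominates a positive multiple of `g` moved from the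
origin to `z`. For `F = φ m` it is the one-sided form of the local factorization
`m(z + p) = α(p) g(p)`, `α > c`, which transfers lower bounds from `g` to `F`. -/
structure DominatesNear (F g : ℝ × ℝ → ℝ) (z : ℝ × ℝ) : Prop where
  integrable : Integrable F
  nonneg : 0 ≤ F
  exists_mul_le : ∃ c > 0, ∀ᶠ p in 𝓝 0, c * g p ≤ F (z + p)

theorem not_hasDecayOn_of_stripBound (hg : 0 ≤ g) (hdom : DominatesNear (φ * m) g z)
    (hv : nrm2 v = 1) (hS : ∀ t : ℝ, t • v ∈ S) {δv : ℝ} {ev : ℕ} (hstrip : StripBound g v δv ev)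
    (hδv : δv < min 1 δ) : ¬ HasDecayOn (Kphi φ m) S δ k := by
  intro hK
  obtain ⟨hδv0, -, cv, hcv, hbounds⟩ := hstrip
  obtain ⟨c, hc, hlow⟩ := hdom.exists_mul_le
  obtain ⟨ρ, hρ, hdisk⟩ := exists_disk2_subset_of_mem_nhds hlow
  obtain ⟨c', hc'0, hc'⟩ := exists_between (lt_min hcv (half_pos hρ))
  obtain ⟨hc'cv, hc'ρ⟩ := lt_min_iff.1 hc'
  obtain ⟨a, ha, _, -, hab⟩ := hbounds c' hc'0 hc'cv
  have hsmall : ∀ᶠ r in 𝓝[>] (0 : ℝ), r ∈ Ioo 0 c' := Ioo_mem_nhdsGT hc'0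
  have hTlow : ∀ᶠ r in 𝓝[>] (0 : ℝ), ∀ p ∈ strip2 v r c', c * g p ≤ (φ * m) (z + p) := by
    filter_upwards [hsmall] with r ⟨hr0, hrc'⟩ p hp
    exact hdisk (disk2_mono (by linarith) (by linarith)
      (strip2_subset_disk2_add hv hr0.le hc'0.le hp))
  have hmass : ∀ᶠ r in 𝓝[>] 0,
      a * r ^ δv * |Real.log r| ^ ev ≤ ∫ p in strip2 v r c', g p := by
    filter_upwards [hsmall] with r hr
    exact (hab r hr.1 hr.2).1
  exact hδv.not_ge (min_one_le_of_hasDecayOn hg hdom.integrable hdom.nonneg hv hS hK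
    (fun r => measurableSet_strip2 v r c') (.of_forall fun r p hp => hp.1) hc hTlow ha hδv0.le
    hmass)

theorem not_hasDecayOn_of_ballBound (hg : 0 ≤ g) (hdom : DominatesNear (φ * m) g z)
    (hv : nrm2 v = 1) (hS : ∀ t : ℝ, t • v ∈ S) {ε : ℝ} {d : ℕ} (hball : BallBound g ε d)
    (hε : ε < min 1 δ) : ¬ HasDecayOn (Kphi φ m) S δ k := by
  intro hK
  obtain ⟨hε0, -, a, ha, _, -, r₀, hr₀, hab⟩ := hball
  obtain ⟨c, hc, hlow⟩ := hdom.exists_mul_le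
  obtain ⟨ρ, hρ, hdisk⟩ := exists_disk2_subset_of_mem_nhds hlow
  have hTstrip : ∀ᶠ r in 𝓝[>] (0 : ℝ), ∀ p ∈ disk2 r, |dot2 p v| < r := by
    filter_upwards [self_mem_nhdsWithin] with r (hr : 0 < r) p hp
    exact abs_dot2_lt_of_mem_disk2 hv hr.le hp
  have hTlow : ∀ᶠ r in 𝓝[>] (0 : ℝ), ∀ p ∈ disk2 r, c * g p ≤ (φ * m) (z + p) := by
    filter_upwards [Ioo_mem_nhdsGT hρ] with r ⟨hr0, hrρ⟩ p hp
    exact hdisk (disk2_mono hr0.le hrρ.le hp)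
  have hmass : ∀ᶠ r in 𝓝[>] 0, a * r ^ ε * |Real.log r| ^ d ≤ ∫ p in disk2 r, g p := by
    filter_upwards [Ioo_mem_nhdsGT hr₀] with r hr
    exact (hab r hr.1 hr.2).1
  exact hε.not_ge (min_one_le_of_hasDecayOn hg hdom.integrable hdom.nonneg hv hS hK
    measurableSet_disk2 hTstrip hc hTlow ha hε0.le hmass)

theorem kernel_bound_sharp_general {g φ m : ℝ × ℝ → ℝ} {z : ℝ × ℝ} (hg : 0 ≤ g)
    (hdom : DominatesNear (φ * m) g z) :
    (∀ (v : ℝ × ℝ) (δv : ℝ) (ev : ℕ), nrm2 v = 1 → StripBound g v δv ev →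
      δv < 1 → ∀ H > (0 : ℝ), ∀ δ > δv, ∀ k : ℕ,
        ¬ HasDecayOn (Kphi φ m) (lineNhd v H) δ k) ∧
    (∀ (ε : ℝ) (d : ℕ), BallBound g ε d →
      ε < 1 → ∀ v : ℝ × ℝ, nrm2 v = 1 → ∀ H > (0 : ℝ), ∀ δ > ε, ∀ k : ℕ,
        ¬ HasDecayOn (Kphi φ m) (lineNhd v H) δ k) ∧
    (∀ δ₀ : ℝ,
      IsGLB {δv : ℝ | ∃ (v : ℝ × ℝ) (ev : ℕ), nrm2 v = 1 ∧ StripBound g v δv ev} δ₀ →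
      δ₀ < 1 → ∀ δ > δ₀, ∀ k : ℕ, ¬ HasDecayOn (Kphi φ m) Set.univ δ k) := by
  refine ⟨fun v δv ev hv hstrip hδv1 H hH δ hδ k => ?_,
    fun ε d hball hε1 v hv H hH δ hδ k => ?_, fun δ₀ hglb hδ₀1 δ hδ k => ?_⟩
  · exact not_hasDecayOn_of_stripBound hg hdom hv (smul_mem_lineNhd v hH.le) hstrip
      (lt_min hδv1 hδ)
  · exact not_hasDecayOn_of_ballBound hg hdom hv (smul_mem_lineNhd v hH.le) hball
      (lt_min hε1 hδ)
  · obtain ⟨δv, ⟨v, ev, hv, hstrip⟩, hδv⟩ := (isGLB_lt_iff hglb).1 (lt_min hδ₀1 hδ)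
    exact not_hasDecayOn_of_stripBound hg hdom hv (fun _ => mem_univ _) hstrip hδv

end KernelDecay

section LocalMultiplier

theorem stdFun_nonneg (n : ℕ) (f : Fin n → ℝ × ℝ → ℝ) (γ : Fin n → ℝ) (E : Set (ℝ × ℝ)) :
    0 ≤ stdFun n f γ E :=
  Set.indicator_nonneg fun q _ => Finset.prod_nonneg fun i _ =>
    Real.rpow_nonneg (abs_nonneg (f i q)) _

theorem AlphaBound.aestronglyMeasurable {α : ℝ × ℝ → ℝ} {A : ℝ} {U : Set (ℝ × ℝ)}
    (hα : AlphaBound α A U) (hU : MeasurableSet U) :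
    AEStronglyMeasurable α (volume.restrict U) := by
  have hpunctured : AEStronglyMeasurable α (volume.restrict (U \ {0})) :=
    hα.1.continuousOn.aestronglyMeasurable (hU.diff (measurableSet_singleton 0))
  rwa [Measure.restrict_congr_set (sdiff_null_ae_eq_self (measure_singleton 0))] at hpunctured

theorem AlphaBound.integrableOn_mul {α g : ℝ × ℝ → ℝ} {A : ℝ} {U : Set (ℝ × ℝ)}
    (hα : AlphaBound α A U) (hU : MeasurableSet U) (hg : IntegrableOn g U) :
    IntegrableOn (fun p => α p * g p) U :=
  hg.bdd_mul (c := A) (hα.aestronglyMeasurable hU)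
    ((ae_restrict_iff' hU).2 (ae_of_all _ hα.2.1))

variable {φ m M : ℝ × ℝ → ℝ} {U : Set (ℝ × ℝ)} {z : ℝ × ℝ}

theorem integrable_mul_of_translate_eqOn (hU : MeasurableSet U) (hM : IntegrableOn M U)
    (hm : ∀ p ∈ U, m (z + p) = M p) (hφ : Continuous φ) (hφcpt : HasCompactSupport φ)
    (hφsupp : ∀ p, z + p ∈ tsupport φ → p ∈ U) : Integrable (φ * m) := by
  obtain ⟨B, hB⟩ := hφcpt.exists_bound_of_continuous hφ
  have hφM : IntegrableOn (fun p => φ (z + p) * M p) U :=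
    hM.bdd_mul (c := B) (hφ.comp (continuous_const_add z)).aestronglyMeasurable
      (ae_of_all _ fun p => hB _)
  have hφm : IntegrableOn (fun p => (φ * m) (z + p)) U :=
    hφM.congr_fun (fun p hp => by simp only [Pi.mul_apply, hm p hp]) hU
  have hsupp : (Function.support fun p => (φ * m) (z + p)) ⊆ U := fun p hp =>
    hφsupp p (subset_tsupport φ (left_ne_zero_of_mul hp))
  have htranslate := (integrableOn_iff_integrable_of_support_subset hsupp).1 hφm
  simpa only [add_neg_cancel_left] using htranslate.comp_add_left (-z)

theorem mul_nonneg_of_translate_eqOn (hM : ∀ p ∈ U, 0 ≤ M p) (hm : ∀ p ∈ U, m (z + p) = M p)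
    (hφ : ∀ p, 0 ≤ φ p) (hφsupp : ∀ p, z + p ∈ tsupport φ → p ∈ U) : 0 ≤ φ * m := by
  intro p
  by_cases hp : p ∈ tsupport φ
  · have hpU : p - z ∈ U := hφsupp _ (by rwa [add_sub_cancel])
    have hmp : m p = M (p - z) := by simpa only [add_sub_cancel] using hm _ hpU
    exact mul_nonneg (hφ p) (hmp ▸ hM _ hpU)
  · simp [image_eq_zero_of_notMem_tsupport hp]

theorem eventually_mul_translate_eq (hU : U ∈ 𝓝 0) (hm : ∀ p ∈ U, m (z + p) = M p)
    (hφ : ∀ᶠ p in 𝓝 z, φ p = 1) : ∀ᶠ p in 𝓝 0, (φ * m) (z + p) = M p := by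
  have htranslate : Tendsto (z + ·) (𝓝 0) (𝓝 z) := by
    simpa using (continuous_const_add z).tendsto 0
  filter_upwards [hU, htranslate.eventually hφ] with p hpU hφp
  rw [Pi.mul_apply, hφp, one_mul, hm p hpU]

theorem AlphaBound.dominatesNear_mul {α g : ℝ × ℝ → ℝ} {A c : ℝ} (hα : AlphaBound α A U)
    (hUo : IsOpen U) (hU0 : 0 ∈ U) (hg : 0 ≤ g) (hgU : IntegrableOn g U)
    (hm : ∀ p ∈ U, m (z + p) = α p * g p) (hc : 0 < c) (hαc : ∀ p ∈ U, c < α p)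
    (hφ : Continuous φ) (hφcpt : HasCompactSupport φ) (hφnn : ∀ p, 0 ≤ φ p)
    (hφone : ∀ᶠ p in 𝓝 z, φ p = 1) (hφsupp : ∀ p, z + p ∈ tsupport φ → p ∈ U) :
    DominatesNear (φ * m) g z where
  integrable := integrable_mul_of_translate_eqOn hUo.measurableSet
    (hα.integrableOn_mul hUo.measurableSet hgU) hm hφ hφcpt hφsupp
  nonneg := mul_nonneg_of_translate_eqOn
    (fun p hp => mul_nonneg (hc.trans (hαc p hp)).le (hg p)) hm hφnn hφsupp
  exists_mul_le := by
    refine ⟨c, hc, ?_⟩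
    filter_upwards [hUo.mem_nhds hU0, eventually_mul_translate_eq (hUo.mem_nhds hU0) hm hφone]
      with p hpU hp
    exact hp ▸ mul_le_mul_of_nonneg_right (hαc p hpU).le (hg p)

end LocalMultiplier

/-- Sharpness of the kernel estimates.  `U` is a neighborhood of the origin on which the local
multiplier setup holds with `α > c > 0` and on which `g` is integrable; "`φ` has sufficiently
small support" means that the support of `φ`, moved to the origin, lies in `U`.
The three conclusions say that one cannot improve the exponent `δ_v` on the strip `l_H` in the
direction `v` (the choice `k = 0` is the bound without logarithm), the exponent `ε` on any such
strip, and the exponent `min_v δ_v` on the whole plane. -/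
theorem kernel_bound_sharp {n : ℕ} (f : Fin n → ℝ × ℝ → ℝ) (γ : Fin n → ℝ) (E : Set (ℝ × ℝ))
    (hsf : StandardForm n f γ E)
    (x₀ y₀ A : ℝ) (hA : 0 < A) (α m : ℝ × ℝ → ℝ)
    (U : Set (ℝ × ℝ)) (hUo : IsOpen U) (hU0 : (0 : ℝ × ℝ) ∈ U)
    (hgU : IntegrableOn (stdFun n f γ E) U)
    (hα : AlphaBound α A U)
    (hm : ∀ p ∈ U, m ((x₀, y₀) + p) = α p * stdFun n f γ E p)
    (c : ℝ) (hc : 0 < c) (hαc : ∀ p ∈ U, c < α p)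
    (φ : ℝ × ℝ → ℝ) (hφsmooth : ContDiff ℝ ∞ φ) (hφcpt : HasCompactSupport φ)
    (hφnn : ∀ p, 0 ≤ φ p) (hφone : ∀ᶠ p in 𝓝 ((x₀, y₀) : ℝ × ℝ), φ p = 1)
    (hφsupp : ∀ p : ℝ × ℝ, (x₀, y₀) + p ∈ tsupport φ → p ∈ U) :
    (∀ (v : ℝ × ℝ) (δv : ℝ) (ev : ℕ), nrm2 v = 1 → StripBound (stdFun n f γ E) v δv ev →
      δv < 1 → ∀ H > (0 : ℝ), ∀ δ > δv, ∀ k : ℕ,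
        ¬ HasDecayOn (Kphi φ m) (lineNhd v H) δ k) ∧
    (∀ (ε : ℝ) (d : ℕ), BallBound (stdFun n f γ E) ε d →
      ε < 1 → ∀ v : ℝ × ℝ, nrm2 v = 1 → ∀ H > (0 : ℝ), ∀ δ > ε, ∀ k : ℕ,
        ¬ HasDecayOn (Kphi φ m) (lineNhd v H) δ k) ∧
    (∀ δ₀ : ℝ,
      IsGLB {δv : ℝ | ∃ (v : ℝ × ℝ) (ev : ℕ),
        nrm2 v = 1 ∧ StripBound (stdFun n f γ E) v δv ev} δ₀ →
      δ₀ < 1 → ∀ δ > δ₀, ∀ k : ℕ, ¬ HasDecayOn (Kphi φ m) Set.univ δ k) := by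
  have hg := stdFun_nonneg n f γ E
  exact kernel_bound_sharp_general hg (hα.dominatesNear_mul hUo hU0 hg hgU hm hc hαc
    hφsmooth.continuous hφcpt hφnn hφone hφsupp)
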